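/- Let Γ be a y-monotone poly-line drawing, with b bends in total, of a connected finite simple planar graph G with n vertices and m edges. Then G has a flat visibility representation with the same y-coordinates as Γ (in particular of the same height as Γ) and width at most max{n + b, m + b}. -/

import Mathlib

open Set

/-- A point in the plane. -/
abbrev Pt : Type := ℝ × ℝ

/-- A point has integer coordinates. -/
def IsIntPt (p : Pt) : Prop := (∃ a : ℤ, p.1 = (a : ℝ)) ∧ (∃ b : ℤ, p.2 = (b : ℝ))

/-- The (closed) segments of a polygonal chain, as pairs of consecutive corners. -/
def chainSegs (l : List Pt) : List (Pt × Pt) := l.zip l.tail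

/-- The set of points covered by a polygonal chain. -/
def chainSet (l : List Pt) : Set Pt := ⋃ s ∈ chainSegs l, segment ℝ s.1 s.2

/-- A polygonal chain is simple (non-self-intersecting): it has at least two
corners, all corners are distinct, and two of its segments meet only if they are
consecutive, and then only in their shared corner. -/
def IsSimpleChain (l : List Pt) : Prop :=
  2 ≤ l.length ∧ l.Nodup ∧
    ∀ i j : ℕ, i < j → ∀ (hi : i < (chainSegs l).length) (hj : j < (chainSegs l).length),
      segment ℝ ((chainSegs l).get ⟨i, hi⟩).1 ((chainSegs l).get ⟨i, hi⟩).2 ∩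
        segment ℝ ((chainSegs l).get ⟨j, hj⟩).1 ((chainSegs l).get ⟨j, hj⟩).2 ⊆
        if j = i + 1 then {((chainSegs l).get ⟨j, hj⟩).1} else (∅ : Set Pt)

/-- Every interior corner of the chain is a genuine bend (a direction change). -/
def GenuineBends (l : List Pt) : Prop :=
  ∀ i : ℕ, ∀ h : i + 2 < l.length,
    ¬ Collinear ℝ ({l.get ⟨i, by omega⟩, l.get ⟨i + 1, by omega⟩, l.get ⟨i + 2, h⟩} : Set Pt)

/-- The chain is a y-monotone path (horizontal segments allowed). -/
def IsMonoChain (l : List Pt) : Prop :=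
  (l.map Prod.snd).Chain' (· ≤ ·) ∨ (l.map Prod.snd).Chain' (fun a b => b ≤ a)

/-- All segments of the chain are horizontal or vertical. -/
def IsOrthoChain (l : List Pt) : Prop :=
  ∀ s ∈ chainSegs l, s.1.1 = s.2.1 ∨ s.1.2 = s.2.2

/-- A poly-line drawing of a graph `G`: every vertex is a point, and every edge
`uv` is the polygonal chain through the list `bends u v` of bend points
(listed in order from `u` to `v`). -/
structure PolylineDrawing {V : Type*} (G : SimpleGraph V) where
  pos : V → Pt
  bends : V → V → List Pt
  bends_symm : ∀ u v, bends v u = (bends u v).reverse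

namespace PolylineDrawing

variable {V : Type*} {G : SimpleGraph V}

/-- The corner list of the curve of edge `uv`. -/
def chain (D : PolylineDrawing G) (u v : V) : List Pt :=
  D.pos u :: (D.bends u v ++ [D.pos v])

/-- The set of points of the curve of edge `uv`. -/
def curve (D : PolylineDrawing G) (u v : V) : Set Pt := chainSet (D.chain u v)

/-- The defining elements of the drawing: vertex points and bends. -/
def points (D : PolylineDrawing G) : Set Pt :=
  Set.range D.pos ∪ ⋃ (u) (v) (_ : G.Adj u v), {p | p ∈ D.bends u v}

/-- The drawing is planar: vertex points are pairwise distinct, every edge curve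
is a simple chain whose interior corners are genuine bends, an edge curve contains
no vertex point other than its endpoints, and two distinct edge curves intersect
only in points of common endpoints. -/
def IsPlanar (D : PolylineDrawing G) : Prop :=
  Function.Injective D.pos ∧
  (∀ u v, G.Adj u v → IsSimpleChain (D.chain u v) ∧ GenuineBends (D.chain u v)) ∧
  (∀ u v w, G.Adj u v → w ≠ u → w ≠ v → D.pos w ∉ D.curve u v) ∧
  (∀ u v x y, G.Adj u v → G.Adj x y → s(u, v) ≠ s(x, y) →
    D.curve u v ∩ D.curve x y ⊆ D.pos '' (({u, v} : Set V) ∩ ({x, y} : Set V)))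

/-- All defining elements have integer coordinates. -/
def IntCoords (D : PolylineDrawing G) : Prop := ∀ p ∈ D.points, IsIntPt p

/-- A straight-line drawing: no edge has bends. -/
def IsStraightLine (D : PolylineDrawing G) : Prop := ∀ u v : V, D.bends u v = []

/-- Every edge curve is a y-monotone path. -/
def IsYMonotone (D : PolylineDrawing G) : Prop :=
  ∀ u v, G.Adj u v → IsMonoChain (D.chain u v)

/-- The drawing fits (after translation) in the rows `1, …, h`. -/
def InHeight (D : PolylineDrawing G) (h : ℕ) : Prop :=
  ∃ y0 : ℤ, ∀ p ∈ D.points, (y0 : ℝ) ≤ p.2 ∧ p.2 ≤ (y0 : ℝ) + (h : ℝ) - 1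

/-- The drawing fits (after translation) in the columns `1, …, w`. -/
def InWidth (D : PolylineDrawing G) (w : ℕ) : Prop :=
  ∃ x0 : ℤ, ∀ p ∈ D.points, (x0 : ℝ) ≤ p.1 ∧ p.1 ≤ (x0 : ℝ) + (w : ℝ) - 1

end PolylineDrawing

/-- An axis-parallel box (possibly degenerated to a segment or a point). -/
structure Box where
  x1 : ℝ
  x2 : ℝ
  y1 : ℝ
  y2 : ℝ
  hx : x1 ≤ x2
  hy : y1 ≤ y2

/-- The set of points of a box. -/
def Box.pts (b : Box) : Set Pt := Set.Icc b.x1 b.x2 ×ˢ Set.Icc b.y1 b.y2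

/-- An orthogonal drawing of a graph `G`: every vertex is an axis-aligned box, and
every edge `uv` is an axis-parallel polygonal chain `chain u v` (its first corner is
the attachment point on the box of `u`, its last corner the attachment point on the
box of `v`). -/
structure OrthDrawing {V : Type*} (G : SimpleGraph V) where
  box : V → Box
  chain : V → V → List Pt
  chain_symm : ∀ u v, chain v u = (chain u v).reverse

namespace OrthDrawing

variable {V : Type*} {G : SimpleGraph V}

/-- The set of points of the curve of edge `uv`. -/
def curve (D : OrthDrawing G) (u v : V) : Set Pt := chainSet (D.chain u v)

/-- The defining elements of the drawing: corners of vertex boxes, and corners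
(attachment points and bends) of edge chains. -/
def points (D : OrthDrawing G) : Set Pt :=
  (⋃ v, ({((D.box v).x1, (D.box v).y1), ((D.box v).x1, (D.box v).y2),
          ((D.box v).x2, (D.box v).y1), ((D.box v).x2, (D.box v).y2)} : Set Pt)) ∪
    ⋃ (u) (v) (_ : G.Adj u v), {p | p ∈ D.chain u v}

/-- All points covered by the drawing (boxes and edge curves). -/
def region (D : OrthDrawing G) : Set Pt :=
  (⋃ v, (D.box v).pts) ∪ ⋃ (u) (v) (_ : G.Adj u v), D.curve u v

/-- The drawing is planar: vertex boxes are pairwise disjoint; every edge curve is a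
simple axis-parallel chain, with genuine bends, joining the boxes of its endpoints;
an edge curve meets a vertex box only in its attachment points; and two distinct
edge curves intersect only in common endpoints. -/
def IsPlanar (D : OrthDrawing G) : Prop :=
  (∀ u v : V, u ≠ v → Disjoint (D.box u).pts (D.box v).pts) ∧
  (∀ u v, G.Adj u v → IsSimpleChain (D.chain u v) ∧ IsOrthoChain (D.chain u v) ∧
      GenuineBends (D.chain u v)) ∧
  (∀ u v, G.Adj u v → ∃ p q l, D.chain u v = p :: (l ++ [q]) ∧
      p ∈ (D.box u).pts ∧ q ∈ (D.box v).pts) ∧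
  (∀ u v w, G.Adj u v → D.curve u v ∩ (D.box w).pts ⊆
      {p | (w = u ∧ (D.chain u v).head? = some p) ∨
           (w = v ∧ (D.chain u v).getLast? = some p)}) ∧
  (∀ u v x y, G.Adj u v → G.Adj x y → s(u, v) ≠ s(x, y) →
      D.curve u v ∩ D.curve x y ⊆
        {p | ((D.chain u v).head? = some p ∨ (D.chain u v).getLast? = some p) ∧
             ((D.chain x y).head? = some p ∨ (D.chain x y).getLast? = some p)})

/-- A flat drawing: every vertex box is degenerated to a horizontal segment. -/
def IsFlat (D : OrthDrawing G) : Prop := ∀ v, (D.box v).y1 = (D.box v).y2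

/-- A visibility representation: an orthogonal drawing without bends, i.e. every
edge is a single horizontal or vertical segment. -/
def IsVR (D : OrthDrawing G) : Prop := ∀ u v, G.Adj u v → (D.chain u v).length = 2

/-- Every edge curve is a y-monotone path. -/
def IsYMonotone (D : OrthDrawing G) : Prop := ∀ u v, G.Adj u v → IsMonoChain (D.chain u v)

/-- All defining elements have integer coordinates. -/
def IntCoords (D : OrthDrawing G) : Prop := ∀ p ∈ D.points, IsIntPt p

/-- The drawing fits (after translation) in the rows `1, …, h`. -/
def InHeight (D : OrthDrawing G) (h : ℕ) : Prop :=
  ∃ y0 : ℤ, ∀ p ∈ D.points, (y0 : ℝ) ≤ p.2 ∧ p.2 ≤ (y0 : ℝ) + (h : ℝ) - 1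

/-- The drawing fits (after translation) in the columns `1, …, w`. -/
def InWidth (D : OrthDrawing G) (w : ℕ) : Prop :=
  ∃ x0 : ℤ, ∀ p ∈ D.points, (x0 : ℝ) ≤ p.1 ∧ p.1 ≤ (x0 : ℝ) + (w : ℝ) - 1

end OrthDrawing

/-- The total number of bends of a poly-line drawing. -/
def PolylineDrawing.bendCount {V : Type} [Fintype V] [DecidableEq V]
    {G : SimpleGraph V} [DecidableRel G.Adj] (D : PolylineDrawing G) : ℕ :=
  ∑ e ∈ G.edgeFinset, Sym2.lift
    ⟨fun u v => (D.bends u v).length,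
     fun u v => by simp only [D.bends_symm u v, List.length_reverse]⟩ e

/-!
Take the curves of the non-level edges together with the point of every vertex all of whose edges
are level. They meet only in vertices, at their lower or upper ends, so two of them never change
sides. Hence *left of* composes through the curve with the highest bottom: if `A` is left of `C`
and `C` is left of `B`, then on the lower of the two witnessing rows all three curves are present.
So the curves can be inserted one at a time, by increasing bottom, into a numbering that respects
*left of*.

The number of a curve becomes its column. A vertex occupies, in its own row, the interval of the
columns of the curves through it; a non-level edge is drawn in its column; a level edge spans the
gap between two intervals. The width is the number of curves, to which bends do not contribute. In
a connected graph it is at most `max n m`: if every edge is level, there are at most `n` curves, and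
otherwise a vertex with only level edges is charged to its first edge on a shortest path to a fixed
end of a non-level edge.
-/

section Numbering

variable {α β : Type*} {R : α → α → Prop} {S : Set α} {g : α → ℕ}

/-- A numbering of `S` by distinct numbers below `S.ncard` that increases along `R`. It will
assign columns to the curves of a drawing, with `R` the relation of lying to the left. -/
structure IsNumbering (R : α → α → Prop) (S : Set α) (g : α → ℕ) : Prop where
  injOn : InjOn g S
  lt_ncard : ∀ a ∈ S, g a < S.ncard
  lt_of_rel : ∀ a ∈ S, ∀ b ∈ S, R a b → g a < g b

theorem IsNumbering.exists_insert (hg : IsNumbering R S g) (hS : S.Finite) {c : α} (hc : c ∉ S)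
    (hirrefl : ¬ R c c) (htrans : ∀ a ∈ S, ∀ b ∈ S, R a c → R c b → R a b) :
    ∃ g', IsNumbering R (insert c S) g' := by
  classical
  -- Open a gap at the least position `m` to the right of all predecessors of `c`.
  set above : Set ℕ := {n | ∀ a ∈ S, R a c → g a < n}
  set m := sInf above
  have hncard : S.ncard ∈ above := fun a ha _ ↦ hg.lt_ncard a ha
  have hpred : m ∈ above := Nat.sInf_mem ⟨_, hncard⟩
  have hsucc : ∀ b ∈ S, R c b → m ≤ g b := fun b hb hcb ↦
    Nat.sInf_le fun a ha hac ↦ hg.lt_of_rel a ha b hb (htrans a ha b hb hac hcb)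
  have hm : m ≤ S.ncard := Nat.sInf_le hncard
  have hne : ∀ a ∈ S, a ≠ c := fun a ha hac ↦ hc (hac ▸ ha)
  refine ⟨fun a ↦ if a = c then m else if g a < m then g a else g a + 1, ?_, ?_, ?_⟩
  · rintro a (rfl | ha) b (rfl | hb) hab
    · rfl
    · grind
    · grind
    · exact hg.injOn ha hb (by grind)
  · rw [ncard_insert_of_notMem hc hS]
    rintro a (rfl | ha)
    · simpa using Nat.lt_succ_of_le hm
    · grind [hg.lt_ncard a ha]
  · rintro a (rfl | ha) b (rfl | hb) hab
    · exact absurd hab hirrefl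
    · grind
    · grind [hpred a ha hab]
    · grind [hg.lt_of_rel a ha b hb hab]

theorem exists_isNumbering_of_rank [LinearOrder β] (rank : α → β) (hS : S.Finite)
    (hirrefl : ∀ a, ¬ R a a)
    (htrans : ∀ a ∈ S, ∀ b ∈ S, ∀ c ∈ S, rank a ≤ rank c → rank b ≤ rank c →
      R a c → R c b → R a b) :
    ∃ g, IsNumbering R S g := by
  classical
  lift S to Finset α using hS
  induction S using Finset.induction_on_max_value rank with
  | empty => exact ⟨fun _ ↦ 0, by simp, by simp, by simp⟩
  | insert c S hc hmax ih =>
    have hsub : ∀ a ∈ S, a ∈ insert c S := fun a ha ↦ Finset.mem_insert_of_mem ha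
    obtain ⟨g, hg⟩ := ih fun a ha b hb d hd ↦ htrans a (hsub a ha) b (hsub b hb) d (hsub d hd)
    rw [Finset.coe_insert]
    exact hg.exists_insert S.finite_toSet hc (hirrefl c) fun a ha b hb ↦
      htrans a (hsub a ha) b (hsub b hb) c (Finset.mem_insert_self c S) (hmax a ha) (hmax b hb)

end Numbering

section MonotoneCurve

variable {A B C : Set Pt} {y y₁ y₂ : ℝ}

/-- The abscissae of the points of `A` at height `y`. -/
def rowSlice (A : Set Pt) (y : ℝ) : Set ℝ := {x | (x, y) ∈ A}

/-- A y-monotone curve, possibly with horizontal parts, as a point set: it meets every row in an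
interval. Single points are allowed. -/
structure IsMonotoneCurve (A : Set Pt) : Prop where
  isCompact : IsCompact A
  isPreconnected : IsPreconnected A
  ordConnected_rowSlice : ∀ y, (rowSlice A y).OrdConnected

theorem isMonotoneCurve_of_convex (hA : IsCompact A) (hconv : Convex ℝ A) :
    IsMonotoneCurve A where
  isCompact := hA
  isPreconnected := hconv.isPreconnected
  ordConnected_rowSlice y := by
    refine Convex.ordConnected fun p hp q hq a b ha hb hab ↦ ?_
    have hmem := hconv hp hq ha hb hab
    rwa [Prod.smul_mk, Prod.smul_mk, Prod.mk_add_mk, Convex.combo_self hab] at hmem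

theorem isMonotoneCurve_segment (p q : Pt) : IsMonotoneCurve (segment ℝ p q) := by
  refine isMonotoneCurve_of_convex ?_ (convex_segment p q)
  rw [segment_eq_image_lineMap]
  exact isCompact_Icc.image AffineMap.lineMap_continuous

theorem IsMonotoneCurve.union (hA : IsMonotoneCurve A) (hB : IsMonotoneCurve B) {p : Pt}
    (hpA : p ∈ A) (hpB : p ∈ B) (hAp : ∀ q ∈ A, q.2 ≤ p.2) (hBp : ∀ q ∈ B, p.2 ≤ q.2) :
    IsMonotoneCurve (A ∪ B) where
  isCompact := hA.isCompact.union hB.isCompact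
  isPreconnected := hA.isPreconnected.union p hpA hpB hB.isPreconnected
  ordConnected_rowSlice y := by
    change (rowSlice A y ∪ rowSlice B y).OrdConnected
    rcases lt_trichotomy y p.2 with hy | rfl | hy
    · have hempty : rowSlice B y = ∅ :=
        eq_empty_of_forall_notMem fun x hx ↦ (hBp _ hx).not_gt hy
      simpa only [hempty, union_empty] using hA.ordConnected_rowSlice y
    · exact ((hA.ordConnected_rowSlice _).isPreconnected.union p.1 hpA hpB
        (hB.ordConnected_rowSlice _).isPreconnected).ordConnected
    · have hempty : rowSlice A y = ∅ :=
        eq_empty_of_forall_notMem fun x hx ↦ (hAp _ hx).not_gt hy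
      simpa only [hempty, empty_union] using hB.ordConnected_rowSlice y

theorem IsMonotoneCurve.rowSlice_nonempty (hA : IsMonotoneCurve A)
    (h₁ : (rowSlice A y₁).Nonempty) (h₂ : (rowSlice A y₂).Nonempty) (hy : y ∈ uIcc y₁ y₂) :
    (rowSlice A y).Nonempty := by
  obtain ⟨x₁, hx₁⟩ := h₁
  obtain ⟨x₂, hx₂⟩ := h₂
  have hheights : (Prod.snd '' A).OrdConnected :=
    (hA.isPreconnected.image _ continuous_snd.continuousOn).ordConnected
  obtain ⟨p, hp, rfl⟩ := hheights.uIcc_subset ⟨_, hx₁, rfl⟩ ⟨_, hx₂, rfl⟩ hy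
  exact ⟨p.1, hp⟩

/-- The lowest height reached by `A`. -/
noncomputable def bottom (A : Set Pt) : ℝ := sInf (Prod.snd '' A)

theorem IsMonotoneCurve.rowSlice_nonempty_of_bottom_le (hA : IsMonotoneCurve A)
    (h₁ : (rowSlice A y₁).Nonempty) (hbot : bottom A ≤ y) (hy : y ≤ y₁) :
    (rowSlice A y).Nonempty := by
  obtain ⟨x, hx⟩ := h₁
  obtain ⟨p, hp, hp_eq⟩ :=
    (hA.isCompact.image continuous_snd).sInf_mem ⟨y₁, (x, y₁), hx, rfl⟩
  exact hA.rowSlice_nonempty ⟨p.1, hp⟩ ⟨x, hx⟩ (mem_uIcc_of_le (hp_eq.trans_le hbot) hy)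

/-- At height `y`, both `A` and `B` are present and `A` lies entirely to the left of `B`. -/
def LeftAt (y : ℝ) (A B : Set Pt) : Prop :=
  (rowSlice A y).Nonempty ∧ (rowSlice B y).Nonempty ∧
    ∀ p ∈ rowSlice A y, ∀ q ∈ rowSlice B y, p < q

/-- `A` lies to the left of `B` at some height. -/
def LeftOf (A B : Set Pt) : Prop := ∃ y, LeftAt y A B

theorem LeftAt.disjoint (h : LeftAt y A B) : Disjoint (rowSlice A y) (rowSlice B y) :=
  disjoint_left.2 fun x hA hB ↦ lt_irrefl x (h.2.2 x hA x hB)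

theorem LeftAt.irrefl : ¬ LeftAt y A A := fun h ↦
  h.1.ne_empty (disjoint_self.1 h.disjoint)

theorem LeftAt.trans (hAB : LeftAt y A B) (hBC : LeftAt y B C) : LeftAt y A C := by
  obtain ⟨x, hx⟩ := hAB.2.1
  exact ⟨hAB.1, hBC.2.1, fun p hp q hq ↦ (hAB.2.2 p hp x hx).trans (hBC.2.2 x hx q hq)⟩

theorem IsMonotoneCurve.leftAt (hA : IsMonotoneCurve A) (hB : IsMonotoneCurve B)
    (hAB : Disjoint (rowSlice A y) (rowSlice B y)) {p q : ℝ} (hp : p ∈ rowSlice A y)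
    (hq : q ∈ rowSlice B y) (hpq : p < q) : LeftAt y A B := by
  rw [disjoint_left] at hAB
  refine ⟨⟨p, hp⟩, ⟨q, hq⟩, fun p' hp' q' hq' ↦ ?_⟩
  by_contra! hle
  rcases le_or_gt p q' with h | h
  · exact hAB ((hA.ordConnected_rowSlice y).out hp hp' ⟨h, hle⟩) hq'
  · exact hAB hp ((hB.ordConnected_rowSlice y).out hq' hq ⟨h.le, hpq.le⟩)

theorem isClosed_setOf_exists_rowSlice_le (hA : IsCompact A) (hB : IsCompact B) :
    IsClosed {y | ∃ p ∈ rowSlice A y, ∃ q ∈ rowSlice B y, p ≤ q} := by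
  have hcompact : IsCompact ((A ×ˢ B) ∩ {P : Pt × Pt | P.1.2 = P.2.2 ∧ P.1.1 ≤ P.2.1}) :=
    (hA.prod hB).inter_right <|
      (isClosed_eq (by fun_prop) (by fun_prop)).inter
        (isClosed_le (f := fun P : Pt × Pt ↦ P.1.1) (g := fun P ↦ P.2.1)
          (by fun_prop) (by fun_prop))
  convert (hcompact.image (f := fun P : Pt × Pt ↦ P.1.2) (by fun_prop)).isClosed using 1
  ext y
  constructor
  · rintro ⟨p, hp, q, hq, hpq⟩
    exact ⟨((p, y), (q, y)), ⟨⟨hp, hq⟩, rfl, hpq⟩, rfl⟩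
  · rintro ⟨⟨⟨p, y₁⟩, ⟨q, y₂⟩⟩, ⟨⟨hp, hq⟩, hy₁₂, hpq⟩, hy⟩
    obtain rfl : y₁ = y₂ := hy₁₂
    obtain rfl : y₁ = y := hy
    exact ⟨p, hp, q, hq, hpq⟩

theorem LeftAt.of_isPreconnected (h : LeftAt y₁ A B) (hA : IsMonotoneCurve A)
    (hB : IsMonotoneCurve B) {s : Set ℝ} (hs : IsPreconnected s)
    (hAs : ∀ y ∈ s, (rowSlice A y).Nonempty) (hBs : ∀ y ∈ s, (rowSlice B y).Nonempty)
    (hdisj : ∀ y ∈ s, Disjoint (rowSlice A y) (rowSlice B y)) (h₁ : y₁ ∈ s) (h₂ : y₂ ∈ s) :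
    LeftAt y₂ A B := by
  obtain ⟨p, hp⟩ := hAs y₂ h₂
  obtain ⟨q, hq⟩ := hBs y₂ h₂
  have hpq_ne : p ≠ q := fun hpq ↦ disjoint_left.1 (hdisj y₂ h₂) hp (hpq ▸ hq)
  refine hA.leftAt hB (hdisj y₂ h₂) hp hq (hpq_ne.lt_or_gt.resolve_right fun hqp ↦ ?_)
  obtain ⟨p₁, hp₁⟩ := h.1
  obtain ⟨q₁, hq₁⟩ := h.2.1
  -- Where the closed sets of rows with some `A ≤ B` and with some `B ≤ A` meet, the curves meet.
  obtain ⟨y, hy, ⟨a, ha, b, hb, hab⟩, b', hb', a', ha', hba⟩ :=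
    isPreconnected_closed_iff.1 hs _ _
      (isClosed_setOf_exists_rowSlice_le hA.isCompact hB.isCompact)
      (isClosed_setOf_exists_rowSlice_le hB.isCompact hA.isCompact)
      (fun y hy ↦ by
        obtain ⟨a, ha⟩ := hAs y hy
        obtain ⟨b, hb⟩ := hBs y hy
        exact (le_total a b).imp (fun hab ↦ ⟨a, ha, b, hb, hab⟩) (fun hba ↦ ⟨b, hb, a, ha, hba⟩))
      ⟨y₁, h₁, p₁, hp₁, q₁, hq₁, (h.2.2 p₁ hp₁ q₁ hq₁).le⟩ ⟨y₂, h₂, q, hq, p, hp, hqp.le⟩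
  have hab_ne : a ≠ b := fun hab ↦ disjoint_left.1 (hdisj y hy) ha (hab ▸ hb)
  exact ((hA.leftAt hB (hdisj y hy) ha hb (hab.lt_of_ne hab_ne)).2.2 a' ha' b' hb').not_ge hba

end MonotoneCurve

section CurveSystem

variable {N : Set Pt} {S : Set (Set Pt)} {A B C : Set Pt} {y y₁ y₂ : ℝ}

/-- A planar system `S` of y-monotone curves with nodes `N`: the curves meet only in nodes, every
node on a curve is at the lowest or the highest level of the curve, and distinct nodes on a curve
have distinct heights. -/
structure IsCurveSystem (N : Set Pt) (S : Set (Set Pt)) : Prop where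
  isMonotoneCurve : ∀ A ∈ S, IsMonotoneCurve A
  inter_subset : ∀ A ∈ S, ∀ B ∈ S, A ≠ B → A ∩ B ⊆ N
  node_extremal : ∀ A ∈ S, ∀ p ∈ A ∩ N, (∀ q ∈ A, p.2 ≤ q.2) ∨ ∀ q ∈ A, q.2 ≤ p.2
  node_injOn : ∀ A ∈ S, InjOn Prod.snd (A ∩ N)

namespace IsCurveSystem

theorem leftAt_of_leftAt (hS : IsCurveSystem N S) (hA : A ∈ S) (hB : B ∈ S)
    (h : LeftAt y₁ A B) (hA₂ : (rowSlice A y₂).Nonempty) (hB₂ : (rowSlice B y₂).Nonempty)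
    (hdisj : Disjoint (rowSlice A y₂) (rowSlice B y₂)) : LeftAt y₂ A B := by
  have hAB : A ≠ B := by rintro rfl; exact h.irrefl
  have hAmono := hS.isMonotoneCurve A hA
  have hBmono := hS.isMonotoneCurve B hB
  refine h.of_isPreconnected hAmono hBmono isPreconnected_uIcc
    (fun y ↦ hAmono.rowSlice_nonempty h.1 hA₂) (fun y ↦ hBmono.rowSlice_nonempty h.2.1 hB₂)
    (fun y hy ↦ ?_) left_mem_uIcc right_mem_uIcc
  refine disjoint_left.2 fun x hxA hxB ↦ ?_
  have hy₁ : y ≠ y₁ := by rintro rfl; exact disjoint_left.1 h.disjoint hxA hxB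
  have hy₂ : y ≠ y₂ := by rintro rfl; exact disjoint_left.1 hdisj hxA hxB
  obtain ⟨a₁, ha₁⟩ := h.1
  obtain ⟨a₂, ha₂⟩ := hA₂
  rw [mem_uIcc] at hy
  rcases hS.node_extremal A hA (x, y) ⟨hxA, hS.inter_subset A hA B hB hAB ⟨hxA, hxB⟩⟩ with
    hext | hext <;> grind [hext _ ha₁, hext _ ha₂]

theorem leftAt_of_notMem_left (hS : IsCurveSystem N S) (hA : A ∈ S) (hB : B ∈ S) {p : Pt}
    (hpN : p ∈ N) (hpB : p ∈ B) (hpA : p ∉ A) {x : ℝ} (hx : x ∈ rowSlice A p.2)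
    (hlt : x < p.1) : LeftAt p.2 A B := by
  refine (hS.isMonotoneCurve A hA).leftAt (hS.isMonotoneCurve B hB) ?_ hx hpB hlt
  refine disjoint_left.2 fun t htA htB ↦ hpA ?_
  have hAB : A ≠ B := by rintro rfl; exact hpA hpB
  have htp : (t, p.2) = p := hS.node_injOn B hB
    ⟨htB, hS.inter_subset A hA B hB hAB ⟨htA, htB⟩⟩ ⟨hpB, hpN⟩ rfl
  exact htp ▸ htA

theorem leftAt_of_notMem_right (hS : IsCurveSystem N S) (hA : A ∈ S) (hB : B ∈ S) {p : Pt}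
    (hpN : p ∈ N) (hpA : p ∈ A) (hpB : p ∉ B) {x : ℝ} (hx : x ∈ rowSlice B p.2)
    (hlt : p.1 < x) : LeftAt p.2 A B := by
  refine (hS.isMonotoneCurve A hA).leftAt (hS.isMonotoneCurve B hB) ?_ hpA hx hlt
  refine disjoint_left.2 fun t htA htB ↦ hpB ?_
  have hAB : A ≠ B := by rintro rfl; exact hpB hpA
  have htp : (t, p.2) = p := hS.node_injOn A hA
    ⟨htA, hS.inter_subset A hA B hB hAB ⟨htA, htB⟩⟩ ⟨hpA, hpN⟩ rfl
  exact htp ▸ htB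

theorem leftAt_trans_leftOf (hS : IsCurveSystem N S) (hA : A ∈ S) (hB : B ∈ S) (hC : C ∈ S)
    (hAC : LeftAt y A C) (hCB : LeftOf C B) (hBy : (rowSlice B y).Nonempty) :
    LeftAt y A B := by
  obtain ⟨y', hCB⟩ := hCB
  by_cases hdisj : Disjoint (rowSlice C y) (rowSlice B y)
  · exact hAC.trans (hS.leftAt_of_leftAt hC hB hCB hAC.2.1 hBy hdisj)
  -- Otherwise `C` and `B` touch at height `y`, in a node that `A` passes on the left.
  obtain ⟨t, htC, htB⟩ := not_disjoint_iff.1 hdisj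
  have hne : C ≠ B := by rintro rfl; exact hCB.irrefl
  obtain ⟨x, hx⟩ := hAC.1
  exact hS.leftAt_of_notMem_left hA hB (hS.inter_subset C hC B hB hne ⟨htC, htB⟩) htB
    (fun htA ↦ disjoint_left.1 hAC.disjoint htA htC) hx (hAC.2.2 x hx t htC)

theorem leftOf_trans_leftAt (hS : IsCurveSystem N S) (hA : A ∈ S) (hB : B ∈ S) (hC : C ∈ S)
    (hAC : LeftOf A C) (hCB : LeftAt y C B) (hAy : (rowSlice A y).Nonempty) :
    LeftAt y A B := by
  obtain ⟨y', hAC⟩ := hAC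
  by_cases hdisj : Disjoint (rowSlice A y) (rowSlice C y)
  · exact (hS.leftAt_of_leftAt hA hC hAC hAy hCB.1 hdisj).trans hCB
  obtain ⟨t, htA, htC⟩ := not_disjoint_iff.1 hdisj
  have hne : A ≠ C := by rintro rfl; exact hAC.irrefl
  obtain ⟨x, hx⟩ := hCB.2.1
  exact hS.leftAt_of_notMem_right hA hB (hS.inter_subset A hA C hC hne ⟨htA, htC⟩) htA
    (fun htB ↦ disjoint_left.1 hCB.disjoint htC htB) hx (hCB.2.2 t htC x hx)

theorem leftOf_trans (hS : IsCurveSystem N S) (hA : A ∈ S) (hB : B ∈ S) (hC : C ∈ S)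
    (hbotA : bottom A ≤ bottom C) (hbotB : bottom B ≤ bottom C) (hAC : LeftOf A C)
    (hCB : LeftOf C B) : LeftOf A B := by
  have hbotC : ∀ {y}, (rowSlice C y).Nonempty → bottom C ≤ y := fun ⟨x, hx⟩ ↦
    csInf_le ((hS.isMonotoneCurve C hC).isCompact.image continuous_snd).bddBelow ⟨_, hx, rfl⟩
  obtain ⟨y₁, h₁⟩ := hAC
  obtain ⟨y₂, h₂⟩ := hCB
  rcases le_total y₁ y₂ with hy | hy
  · exact ⟨y₁, hS.leftAt_trans_leftOf hA hB hC h₁ ⟨y₂, h₂⟩ <|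
      (hS.isMonotoneCurve B hB).rowSlice_nonempty_of_bottom_le h₂.2.1
        (hbotB.trans (hbotC h₁.2.1)) hy⟩
  · exact ⟨y₂, hS.leftOf_trans_leftAt hA hB hC ⟨y₁, h₁⟩ h₂ <|
      (hS.isMonotoneCurve A hA).rowSlice_nonempty_of_bottom_le h₁.1
        (hbotA.trans (hbotC h₂.1)) hy⟩

theorem exists_isNumbering (hS : IsCurveSystem N S) (hfin : S.Finite) :
    ∃ g, IsNumbering LeftOf S g :=
  exists_isNumbering_of_rank bottom hfin (fun _ ⟨_, h⟩ ↦ h.irrefl)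
    fun _ hA _ hB _ hC ↦ hS.leftOf_trans hA hB hC

end IsCurveSystem

end CurveSystem

section Chain

theorem mem_chainSegs {l : List Pt} {a b : Pt} : (a, b) ∈ chainSegs l ↔ [a, b] <:+: l := by
  induction l with
  | nil => simp [chainSegs]
  | cons c l ih =>
    cases l with
    | nil => simpa [chainSegs] using fun h : [a, b] <:+: [c] ↦ by simpa using h.length_le
    | cons d l => rw [List.infix_cons_iff, ← ih]; simp [chainSegs]

theorem mem_chainSet {l : List Pt} {p : Pt} :
    p ∈ chainSet l ↔ ∃ a b, [a, b] <:+: l ∧ p ∈ segment ℝ a b := by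
  simp only [chainSet, mem_iUnion, Prod.exists, mem_chainSegs, exists_prop]

theorem chainSet_reverse (l : List Pt) : chainSet l.reverse = chainSet l := by
  ext p
  rw [mem_chainSet, mem_chainSet, exists_comm]
  refine exists₂_congr fun a b ↦ and_congr ?_ (by rw [segment_symm])
  rw [← List.reverse_infix]
  simp

theorem chainSet_pair (a b : Pt) : chainSet [a, b] = segment ℝ a b := by
  simp [chainSet, chainSegs]

theorem chainSet_cons_cons_cons (a b c : Pt) (l : List Pt) :
    chainSet (a :: b :: c :: l) = segment ℝ a b ∪ chainSet (b :: c :: l) := by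
  simp [chainSet, chainSegs]

theorem mem_chainSet_of_mem {a b p : Pt} {l : List Pt} (hp : p ∈ a :: b :: l) :
    p ∈ chainSet (a :: b :: l) := by
  induction l generalizing a b with
  | nil =>
    rw [chainSet_pair]
    rcases List.mem_pair.1 hp with rfl | rfl
    exacts [left_mem_segment ℝ p b, right_mem_segment ℝ a p]
  | cons c l ih =>
    rw [chainSet_cons_cons_cons]
    rcases List.mem_cons.1 hp with rfl | hp
    exacts [.inl (left_mem_segment ℝ p b), .inr (ih hp)]

theorem snd_mem_of_mem_chainSet {l : List Pt} {t : Set ℝ} (ht : t.OrdConnected)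
    (hl : ∀ p ∈ l, p.2 ∈ t) {p : Pt} (hp : p ∈ chainSet l) : p.2 ∈ t := by
  obtain ⟨a, b, hab, hp⟩ := mem_chainSet.1 hp
  have hpab : p.2 ∈ segment ℝ a.2 b.2 := (Prod.segment_subset a b hp).2
  rw [segment_eq_uIcc] at hpab
  exact ht.uIcc_subset (hl a (hab.subset (by simp))) (hl b (hab.subset (by simp))) hpab

theorem isMonotoneCurve_chainSet {a b : Pt} {l : List Pt}
    (h : ((a :: b :: l).map Prod.snd).IsChain (· ≤ ·)) :
    IsMonotoneCurve (chainSet (a :: b :: l)) := by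
  induction l generalizing a b with
  | nil => exact chainSet_pair a b ▸ isMonotoneCurve_segment a b
  | cons c l ih =>
    obtain ⟨hab, hbcl⟩ := List.isChain_cons_cons.1 h
    rw [chainSet_cons_cons_cons, ← chainSet_pair]
    refine (chainSet_pair a b ▸ isMonotoneCurve_segment a b).union (ih hbcl) (p := b)
      (mem_chainSet_of_mem (by simp)) (mem_chainSet_of_mem (by simp))
      (fun q ↦ snd_mem_of_mem_chainSet (ordConnected_Iic (a := b.2)) (by simpa using hab))
      (fun q ↦ snd_mem_of_mem_chainSet (ordConnected_Ici (a := b.2)) ?_)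
    exact List.forall_mem_cons.2 ⟨mem_Ici.2 le_rfl, fun q hq ↦
      (List.pairwise_cons.1 hbcl.pairwise).1 q.2 (List.mem_map_of_mem hq)⟩

theorem isSimpleChain_pair {a b : Pt} (hab : a ≠ b) : IsSimpleChain [a, b] := by
  refine ⟨le_rfl, by simpa using hab, fun i j hij hi hj ↦ ?_⟩
  simp only [chainSegs, List.length_zip, List.tail_cons, List.length_cons, List.length_nil] at hj
  omega

theorem genuineBends_pair (a b : Pt) : GenuineBends [a, b] := by
  intro i hi
  simp only [List.length_cons, List.length_nil] at hi
  omega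

theorem isOrthoChain_pair {a b : Pt} : IsOrthoChain [a, b] ↔ a.1 = b.1 ∨ a.2 = b.2 := by
  simp [IsOrthoChain, chainSegs]

end Chain

theorem exists_adj_dist_lt {V : Type*} {G : SimpleGraph V} (hG : G.Connected) {v r : V}
    (hvr : v ≠ r) : ∃ w, G.Adj v w ∧ G.dist w r < G.dist v r := by
  obtain ⟨p, hp⟩ := hG.exists_walk_length_eq_dist v r
  cases p with
  | nil => exact absurd rfl hvr
  | cons h q => exact ⟨_, h, hp ▸ Nat.lt_succ_of_le (SimpleGraph.dist_le q)⟩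

namespace PolylineDrawing

section Curve

variable {V : Type*} {G : SimpleGraph V} {D : PolylineDrawing G} {u v w x y : V} {p : Pt}

theorem chain_symm (D : PolylineDrawing G) (u v : V) : D.chain v u = (D.chain u v).reverse := by
  simp [chain, D.bends_symm u v]

theorem curve_comm (D : PolylineDrawing G) (u v : V) : D.curve u v = D.curve v u := by
  rw [curve, curve, D.chain_symm v u, chainSet_reverse]

theorem exists_chain_eq_cons_cons (D : PolylineDrawing G) (u v : V) :
    ∃ b l, D.chain u v = D.pos u :: b :: l := by
  obtain ⟨b, l, hbl⟩ := List.exists_cons_of_ne_nil (List.concat_ne_nil (D.pos v) (D.bends u v))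
  exact ⟨b, l, by rw [chain, hbl]⟩

theorem mem_curve_of_mem_chain (hp : p ∈ D.chain u v) : p ∈ D.curve u v := by
  obtain ⟨b, l, hbl⟩ := D.exists_chain_eq_cons_cons u v
  rw [hbl] at hp
  rw [curve, hbl]
  exact mem_chainSet_of_mem hp

theorem pos_left_mem_curve : D.pos u ∈ D.curve u v :=
  mem_curve_of_mem_chain List.mem_cons_self

theorem pos_right_mem_curve : D.pos v ∈ D.curve u v :=
  mem_curve_of_mem_chain (by simp [chain])

theorem IsYMonotone.isChain_or_isChain (hD : D.IsYMonotone) (huv : G.Adj u v) :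
    ((D.chain u v).map Prod.snd).IsChain (· ≤ ·) ∨
      ((D.chain v u).map Prod.snd).IsChain (· ≤ ·) := by
  rw [D.chain_symm u v, List.map_reverse, List.isChain_reverse]
  exact hD u v huv

theorem isMonotoneCurve_curve_of_isChain (h : ((D.chain u v).map Prod.snd).IsChain (· ≤ ·)) :
    IsMonotoneCurve (D.curve u v) := by
  obtain ⟨b, l, hbl⟩ := D.exists_chain_eq_cons_cons u v
  rw [hbl] at h
  rw [curve, hbl]
  exact isMonotoneCurve_chainSet h

theorem IsYMonotone.isMonotoneCurve_curve (hD : D.IsYMonotone) (huv : G.Adj u v) :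
    IsMonotoneCurve (D.curve u v) := by
  rcases hD.isChain_or_isChain huv with h | h
  · exact isMonotoneCurve_curve_of_isChain h
  · exact D.curve_comm u v ▸ isMonotoneCurve_curve_of_isChain h

theorem snd_mem_Icc_of_isChain (h : ((D.chain u v).map Prod.snd).IsChain (· ≤ ·))
    (hp : p ∈ D.curve u v) : p.2 ∈ Icc (D.pos u).2 (D.pos v).2 := by
  refine snd_mem_of_mem_chainSet ordConnected_Icc (fun q hq ↦ ?_) hp
  have hsorted := h.pairwise
  simp only [chain, List.map_cons, List.map_append, List.map_nil, List.pairwise_cons,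
    List.pairwise_append] at hsorted
  simp only [chain, List.mem_cons, List.mem_append] at hq
  grind

theorem IsYMonotone.snd_mem_uIcc (hD : D.IsYMonotone) (huv : G.Adj u v)
    (hp : p ∈ D.curve u v) : p.2 ∈ uIcc (D.pos u).2 (D.pos v).2 := by
  rcases hD.isChain_or_isChain huv with h | h
  · exact Icc_subset_uIcc (snd_mem_Icc_of_isChain h hp)
  · exact Icc_subset_uIcc' (snd_mem_Icc_of_isChain h (D.curve_comm u v ▸ hp))

theorem IsPlanar.eq_or_eq_of_pos_mem_curve (hD : D.IsPlanar) (huv : G.Adj u v)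
    (hw : D.pos w ∈ D.curve u v) : w = u ∨ w = v := by
  by_contra! h
  exact hD.2.2.1 u v w huv h.1 h.2 hw

theorem IsPlanar.edge_eq_of_curve_eq (hD : D.IsPlanar) (huv : G.Adj u v) (hxy : G.Adj x y)
    (h : D.curve u v = D.curve x y) : s(u, v) = s(x, y) := by
  have hu := hD.eq_or_eq_of_pos_mem_curve hxy (h ▸ D.pos_left_mem_curve)
  have hv := hD.eq_or_eq_of_pos_mem_curve hxy (h ▸ D.pos_right_mem_curve)
  have huv_ne := huv.ne
  grind

theorem IsPlanar.curve_inter_subset (hD : D.IsPlanar) (huv : G.Adj u v) (hxy : G.Adj x y)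
    (h : s(u, v) ≠ s(x, y)) : D.curve u v ∩ D.curve x y ⊆ D.pos '' ({u, v} ∩ {x, y}) :=
  hD.2.2.2 u v x y huv hxy h

end Curve

section Items

variable {V : Type*} {G : SimpleGraph V} {D : PolylineDrawing G} {u v w r : V} {A B : Set Pt}
  {e : Sym2 V}

/-- All edges at the vertex `v` join it to vertices on its own row. -/
def HasOnlyLevelEdges (D : PolylineDrawing G) (v : V) : Prop :=
  ∀ w, G.Adj v w → (D.pos v).2 = (D.pos w).2

/-- The point sets that receive a column of their own in the visibility representation: the curves
of the edges between different rows, and the vertex points that lie on no such curve. -/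
def items (D : PolylineDrawing G) : Set (Set Pt) :=
  {A | (∃ u v, G.Adj u v ∧ (D.pos u).2 ≠ (D.pos v).2 ∧ A = D.curve u v) ∨
    ∃ v, D.HasOnlyLevelEdges v ∧ A = {D.pos v}}

theorem curve_mem_items (huv : G.Adj u v) (hrow : (D.pos u).2 ≠ (D.pos v).2) :
    D.curve u v ∈ D.items :=
  .inl ⟨u, v, huv, hrow, rfl⟩

theorem singleton_mem_items (hv : D.HasOnlyLevelEdges v) : {D.pos v} ∈ D.items :=
  .inr ⟨v, hv, rfl⟩

theorem finite_items [Finite V] (D : PolylineDrawing G) : D.items.Finite := by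
  refine ((finite_range fun e : V × V ↦ D.curve e.1 e.2).union
    (finite_range fun v ↦ {D.pos v})).subset ?_
  rintro _ (⟨u, v, -, -, rfl⟩ | ⟨v, -, rfl⟩)
  exacts [.inl ⟨(u, v), rfl⟩, .inr ⟨v, rfl⟩]

theorem isCurveSystem_items (hpl : D.IsPlanar) (hmono : D.IsYMonotone) :
    IsCurveSystem (range D.pos) D.items where
  isMonotoneCurve := by
    rintro _ (⟨u, v, huv, -, rfl⟩ | ⟨v, -, rfl⟩)
    · exact hmono.isMonotoneCurve_curve huv
    · exact isMonotoneCurve_of_convex isCompact_singleton (convex_singleton _)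
  inter_subset := by
    rintro _ (⟨u, v, huv, -, rfl⟩ | ⟨v, -, rfl⟩) _ (⟨x, y, hxy, -, rfl⟩ | ⟨w, -, rfl⟩) hne
    · refine (hpl.curve_inter_subset huv hxy fun h ↦ hne ?_).trans (image_subset_range _ _)
      rcases Sym2.eq_iff.1 h with ⟨rfl, rfl⟩ | ⟨rfl, rfl⟩
      exacts [rfl, D.curve_comm u v]
    · exact inter_subset_right.trans (singleton_subset_iff.2 ⟨w, rfl⟩)
    all_goals exact inter_subset_left.trans (singleton_subset_iff.2 ⟨v, rfl⟩)
  node_extremal := by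
    rintro _ (⟨u, v, huv, -, rfl⟩ | ⟨v, -, rfl⟩) _ ⟨hw, w, rfl⟩
    · have hheight := fun q ↦ hmono.snd_mem_uIcc (p := q) huv
      simp only [mem_uIcc] at hheight
      grind [hpl.eq_or_eq_of_pos_mem_curve huv hw]
    · rw [mem_singleton_iff.1 hw]
      exact .inl fun q hq ↦ (congrArg Prod.snd hq).ge
  node_injOn := by
    rintro _ (⟨u, v, huv, hrow, rfl⟩ | ⟨v, -, rfl⟩) _ ⟨hw, w, rfl⟩ _ ⟨hw', w', rfl⟩ heq
    · rcases hpl.eq_or_eq_of_pos_mem_curve huv hw with rfl | rfl <;>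
        rcases hpl.eq_or_eq_of_pos_mem_curve huv hw' with rfl | rfl <;> grind
    · exact (mem_singleton_iff.1 hw).trans (mem_singleton_iff.1 hw').symm

/-- The item `A` is charged to the edge `e` of a graph rooted at `r`: a curve to its own edge, a
single vertex to a level edge leading closer to the root. -/
def IsChargedTo (D : PolylineDrawing G) (r : V) (A : Set Pt) (e : Sym2 V) : Prop :=
  ∃ u v, e = s(u, v) ∧ ((A = D.curve u v ∧ (D.pos u).2 ≠ (D.pos v).2) ∨
    (A = {D.pos u} ∧ (D.pos u).2 = (D.pos v).2 ∧ G.dist v r < G.dist u r))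

theorem IsChargedTo.unique (hA : D.IsChargedTo r A e) (hB : D.IsChargedTo r B e) : A = B := by
  obtain ⟨u, v, rfl, hA⟩ := hA
  obtain ⟨x, y, h, hB⟩ := hB
  rcases Sym2.eq_iff.1 h with ⟨rfl, rfl⟩ | ⟨rfl, rfl⟩
  · grind
  · grind [D.curve_comm u v]

theorem exists_isChargedTo (hG : G.Connected) (hr : ¬ D.HasOnlyLevelEdges r)
    (hA : A ∈ D.items) : ∃ e ∈ G.edgeSet, D.IsChargedTo r A e := by
  rcases hA with ⟨u, v, huv, hrow, rfl⟩ | ⟨v, hv, rfl⟩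
  · exact ⟨s(u, v), huv, u, v, rfl, .inl ⟨rfl, hrow⟩⟩
  · obtain ⟨w, hvw, hdist⟩ := exists_adj_dist_lt hG fun h : v = r ↦ hr (h ▸ hv)
    exact ⟨s(v, w), hvw, v, w, rfl, .inr ⟨rfl, hv w hvw, hdist⟩⟩

theorem ncard_items_le [Finite V] (D : PolylineDrawing G) (hG : G.Connected) :
    D.items.ncard ≤ max (Nat.card V) G.edgeSet.ncard := by
  by_cases hall : ∀ v, D.HasOnlyLevelEdges v
  · have hsub : D.items ⊆ range fun v ↦ {D.pos v} := by
      rintro _ (⟨u, v, huv, hrow, rfl⟩ | ⟨v, -, rfl⟩)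
      exacts [absurd (hall u v huv) hrow, ⟨v, rfl⟩]
    exact le_max_of_le_left <| (ncard_le_ncard hsub).trans (Finite.card_range_le _)
  · obtain ⟨r, hr⟩ := not_forall.1 hall
    have : Nonempty (Sym2 V) := ⟨s(r, r)⟩
    choose! f hfG hf using fun A ↦ D.exists_isChargedTo (A := A) hG hr
    refine le_max_of_le_right <| ncard_le_ncard_of_injOn f hfG fun A hA B hB hAB ↦ ?_
    exact (hf A hA).unique (hAB ▸ hf B hB)

end Items

section Column

variable {V : Type*} {G : SimpleGraph V} {D : PolylineDrawing G} {g : Set Pt → ℕ} {u v : V}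
  {A : Set Pt} {x : ℝ}

/-- The vertices `u` and `v` are on the same row, `u` to the left of `v`. -/
def PrecedesInRow (D : PolylineDrawing G) (u v : V) : Prop :=
  (D.pos u).2 = (D.pos v).2 ∧ (D.pos u).1 < (D.pos v).1

theorem IsPlanar.precedesInRow_or (hpl : D.IsPlanar) (huv : u ≠ v)
    (hrow : (D.pos u).2 = (D.pos v).2) : D.PrecedesInRow u v ∨ D.PrecedesInRow v u := by
  have hfst : (D.pos u).1 ≠ (D.pos v).1 := fun h ↦ huv (hpl.1 (Prod.ext h hrow))
  exact hfst.lt_or_gt.imp (fun h ↦ ⟨hrow, h⟩) fun h ↦ ⟨hrow.symm, h⟩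

theorem PrecedesInRow.mem_curve (h : D.PrecedesInRow u v) (hmono : D.IsYMonotone)
    (huv : G.Adj u v) (hx : x ∈ Icc (D.pos u).1 (D.pos v).1) :
    (x, (D.pos u).2) ∈ D.curve u v :=
  ((hmono.isMonotoneCurve_curve huv).ordConnected_rowSlice _).out
    (pos_left_mem_curve : D.pos u ∈ D.curve u v)
    (h.1 ▸ (pos_right_mem_curve : D.pos v ∈ D.curve u v)) hx

/-- The items through the vertex `v`. -/
def itemsAt (D : PolylineDrawing G) (v : V) : Set (Set Pt) := {A ∈ D.items | D.pos v ∈ A}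

theorem itemsAt_nonempty (D : PolylineDrawing G) (v : V) : (D.itemsAt v).Nonempty := by
  by_cases hv : D.HasOnlyLevelEdges v
  · exact ⟨_, singleton_mem_items hv, rfl⟩
  · simp only [HasOnlyLevelEdges, not_forall] at hv
    obtain ⟨w, hvw, hrow⟩ := hv
    exact ⟨_, curve_mem_items hvw hrow, D.pos_left_mem_curve⟩

/-- The leftmost column of an item through `v`, when `g` numbers the columns of the items. -/
noncomputable def leftCol (D : PolylineDrawing G) (g : Set Pt → ℕ) (v : V) : ℕ :=
  sInf (g '' D.itemsAt v)

/-- The rightmost column of an item through `v`, when `g` numbers the columns of the items. It is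
meaningful only if `g '' D.itemsAt v` is bounded, in particular if the graph is finite. -/
noncomputable def rightCol (D : PolylineDrawing G) (g : Set Pt → ℕ) (v : V) : ℕ :=
  sSup (g '' D.itemsAt v)

theorem exists_eq_leftCol (D : PolylineDrawing G) (g : Set Pt → ℕ) (v : V) :
    ∃ A ∈ D.itemsAt v, g A = D.leftCol g v :=
  Nat.sInf_mem ((D.itemsAt_nonempty v).image g)

theorem leftCol_le (hA : A ∈ D.itemsAt v) : D.leftCol g v ≤ g A :=
  Nat.sInf_le (mem_image_of_mem g hA)

theorem lt_leftCol (hpl : D.IsPlanar) (hmono : D.IsYMonotone)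
    (hg : IsNumbering LeftOf D.items g) (hA : A ∈ D.items) (hvA : D.pos v ∉ A)
    (hx : x ∈ rowSlice A (D.pos v).2) (hxv : x < (D.pos v).1) : g A < D.leftCol g v := by
  obtain ⟨B, hB, hgB⟩ := D.exists_eq_leftCol g v
  exact hgB ▸ hg.lt_of_rel A hA B hB.1 ⟨_, (isCurveSystem_items hpl hmono).leftAt_of_notMem_left
    hA hB.1 (mem_range_self v) hB.2 hvA hx hxv⟩

variable [Finite V]

theorem bddAbove_image_itemsAt (D : PolylineDrawing G) (g : Set Pt → ℕ) (v : V) :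
    BddAbove (g '' D.itemsAt v) :=
  ((D.finite_items.subset (sep_subset _ _)).image g).bddAbove

theorem exists_eq_rightCol (D : PolylineDrawing G) (g : Set Pt → ℕ) (v : V) :
    ∃ A ∈ D.itemsAt v, g A = D.rightCol g v :=
  Nat.sSup_mem ((D.itemsAt_nonempty v).image g) (D.bddAbove_image_itemsAt g v)

theorem le_rightCol (hA : A ∈ D.itemsAt v) : g A ≤ D.rightCol g v :=
  le_csSup (D.bddAbove_image_itemsAt g v) (mem_image_of_mem g hA)

theorem leftCol_le_rightCol (D : PolylineDrawing G) (g : Set Pt → ℕ) (v : V) :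
    D.leftCol g v ≤ D.rightCol g v := by
  obtain ⟨A, hA, hgA⟩ := D.exists_eq_leftCol g v
  exact hgA ▸ le_rightCol hA

theorem rightCol_lt_ncard (hg : IsNumbering LeftOf D.items g) (v : V) :
    D.rightCol g v < D.items.ncard := by
  obtain ⟨A, hA, hgA⟩ := D.exists_eq_rightCol g v
  exact hgA ▸ hg.lt_ncard A hA.1

theorem rightCol_lt (hpl : D.IsPlanar) (hmono : D.IsYMonotone)
    (hg : IsNumbering LeftOf D.items g) (hA : A ∈ D.items) (hvA : D.pos v ∉ A)
    (hx : x ∈ rowSlice A (D.pos v).2) (hvx : (D.pos v).1 < x) : D.rightCol g v < g A := by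
  obtain ⟨B, hB, hgB⟩ := D.exists_eq_rightCol g v
  exact hgB ▸ hg.lt_of_rel B hB.1 A hA ⟨_, (isCurveSystem_items hpl hmono).leftAt_of_notMem_right
    hB.1 hA (mem_range_self v) hB.2 hvA hx hvx⟩

theorem PrecedesInRow.rightCol_lt_leftCol (huv : D.PrecedesInRow u v) (hpl : D.IsPlanar)
    (hmono : D.IsYMonotone) (hg : IsNumbering LeftOf D.items g) :
    (D.rightCol g u : ℝ) < D.leftCol g v := by
  obtain ⟨A, hA, hgA⟩ := D.exists_eq_leftCol g v
  rw [← hgA, Nat.cast_lt]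
  refine rightCol_lt hpl hmono hg hA.1 (fun huA ↦ huv.2.ne ?_) (huv.1 ▸ hA.2) huv.2
  have hpos : D.pos u = D.pos v := (isCurveSystem_items hpl hmono).node_injOn A hA.1
    ⟨huA, mem_range_self u⟩ ⟨hA.2, mem_range_self v⟩ huv.1
  rw [hpos]

end Column

section VisibilityDrawing

variable {V : Type*} {G : SimpleGraph V} {D : PolylineDrawing G} {g : Set Pt → ℕ}
  {u v w x y : V} {p : Pt}

/-- The column in which the edge `uv` is attached to `u`: the column of its curve if the edge joins
different rows, and otherwise the end of the segment of `u` that faces `v`. -/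
noncomputable def attachCol (D : PolylineDrawing G) (g : Set Pt → ℕ) (u v : V) : ℕ :=
  if (D.pos u).2 ≠ (D.pos v).2 then g (D.curve u v)
  else if (D.pos u).1 < (D.pos v).1 then D.rightCol g u else D.leftCol g u

theorem attachCol_of_ne (hrow : (D.pos u).2 ≠ (D.pos v).2) :
    D.attachCol g u v = g (D.curve u v) :=
  if_pos hrow

theorem PrecedesInRow.attachCol_left (h : D.PrecedesInRow u v) :
    D.attachCol g u v = D.rightCol g u := by
  rw [attachCol, if_neg (not_not.2 h.1), if_pos h.2]

theorem PrecedesInRow.attachCol_right (h : D.PrecedesInRow u v) :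
    D.attachCol g v u = D.leftCol g v := by
  rw [attachCol, if_neg (not_not.2 h.1.symm), if_neg h.2.not_gt]

/-- The point at which the edge `uv` is attached to the segment of `u`. -/
noncomputable def attach (D : PolylineDrawing G) (g : Set Pt → ℕ) (u v : V) : Pt :=
  (D.attachCol g u v, (D.pos u).2)

theorem isOrthoChain_attach : IsOrthoChain [D.attach g u v, D.attach g v u] := by
  rw [isOrthoChain_pair, or_iff_not_imp_right]
  intro hrow
  rw [attach, attach, attachCol_of_ne hrow, attachCol_of_ne (Ne.symm hrow), D.curve_comm]

variable [Finite V]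

theorem attachCol_mem_Icc (huv : G.Adj u v) :
    D.attachCol g u v ∈ Icc (D.leftCol g u) (D.rightCol g u) := by
  unfold attachCol
  split_ifs with hrow
  · have hmem : D.curve u v ∈ D.itemsAt u := ⟨curve_mem_items huv hrow, pos_left_mem_curve⟩
    exact ⟨leftCol_le hmem, le_rightCol hmem⟩
  · exact right_mem_Icc.2 (D.leftCol_le_rightCol g u)
  · exact left_mem_Icc.2 (D.leftCol_le_rightCol g u)

/-- The flat visibility representation obtained from a numbering `g` of the items: the vertex `v`
occupies the columns from `D.leftCol g v` to `D.rightCol g v` of its row, and an edge between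
different rows runs vertically in the column of its curve. -/
noncomputable def visibilityDrawing (D : PolylineDrawing G) (g : Set Pt → ℕ) :
    OrthDrawing G where
  box v :=
    { x1 := D.leftCol g v
      x2 := D.rightCol g v
      y1 := (D.pos v).2
      y2 := (D.pos v).2
      hx := by exact_mod_cast D.leftCol_le_rightCol g v
      hy := le_rfl }
  chain u v := [D.attach g u v, D.attach g v u]
  chain_symm _ _ := rfl

theorem mem_visibilityDrawing_box : p ∈ ((D.visibilityDrawing g).box v).pts ↔
    p.1 ∈ Icc (D.leftCol g v : ℝ) (D.rightCol g v) ∧ p.2 = (D.pos v).2 := by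
  simp only [Box.pts, visibilityDrawing, Icc_self, mem_prod, mem_singleton_iff]

theorem attach_mem_visibilityDrawing_box (huv : G.Adj u v) :
    D.attach g u v ∈ ((D.visibilityDrawing g).box u).pts := by
  have hcol := attachCol_mem_Icc (D := D) (g := g) huv
  rw [mem_Icc] at hcol
  rw [mem_visibilityDrawing_box, attach, mem_Icc]
  exact ⟨⟨Nat.cast_le.2 hcol.1, Nat.cast_le.2 hcol.2⟩, rfl⟩

theorem visibilityDrawing_curve :
    (D.visibilityDrawing g).curve u v = segment ℝ (D.attach g u v) (D.attach g v u) :=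
  chainSet_pair _ _

theorem visibilityDrawing_curve_comm :
    (D.visibilityDrawing g).curve u v = (D.visibilityDrawing g).curve v u := by
  rw [visibilityDrawing_curve, visibilityDrawing_curve, segment_symm]

theorem mem_visibilityDrawing_curve_of_ne (hrow : (D.pos u).2 ≠ (D.pos v).2) :
    p ∈ (D.visibilityDrawing g).curve u v ↔
      p.1 = g (D.curve u v) ∧ p.2 ∈ uIcc (D.pos u).2 (D.pos v).2 := by
  rw [visibilityDrawing_curve, attach, attach, attachCol_of_ne hrow, attachCol_of_ne hrow.symm,
    D.curve_comm v u, ← Prod.image_mk_segment_right, segment_eq_uIcc]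
  grind

theorem PrecedesInRow.mem_visibilityDrawing_curve (h : D.PrecedesInRow u v) (hpl : D.IsPlanar)
    (hmono : D.IsYMonotone) (hg : IsNumbering LeftOf D.items g) :
    p ∈ (D.visibilityDrawing g).curve u v ↔
      p.1 ∈ Icc (D.rightCol g u : ℝ) (D.leftCol g v) ∧ p.2 = (D.pos u).2 := by
  have hle := (h.rightCol_lt_leftCol hpl hmono hg).le
  rw [visibilityDrawing_curve, attach, attach, h.attachCol_left, h.attachCol_right, ← h.1,
    ← Prod.image_mk_segment_left, segment_eq_Icc hle]
  grind

theorem visibilityDrawing_disjoint_box (hpl : D.IsPlanar) (hmono : D.IsYMonotone)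
    (hg : IsNumbering LeftOf D.items g) (huv : u ≠ v) :
    Disjoint ((D.visibilityDrawing g).box u).pts ((D.visibilityDrawing g).box v).pts := by
  refine disjoint_left.2 fun p hu hv ↦ ?_
  rw [mem_visibilityDrawing_box] at hu hv
  rcases hpl.precedesInRow_or huv (hu.2.symm.trans hv.2) with h | h
  · exact (h.rightCol_lt_leftCol hpl hmono hg).not_ge (hv.1.1.trans hu.1.2)
  · exact (h.rightCol_lt_leftCol hpl hmono hg).not_ge (hu.1.1.trans hv.1.2)

theorem attach_ne_attach (hpl : D.IsPlanar) (hmono : D.IsYMonotone)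
    (hg : IsNumbering LeftOf D.items g) (huv : G.Adj u v) :
    D.attach g u v ≠ D.attach g v u :=
  (visibilityDrawing_disjoint_box hpl hmono hg huv.ne).ne_of_mem
    (attach_mem_visibilityDrawing_box huv) (attach_mem_visibilityDrawing_box huv.symm)

end VisibilityDrawing

section Crossing

variable {V : Type*} {G : SimpleGraph V} {D : PolylineDrawing G} {g : Set Pt → ℕ}
  {u v w x y : V} {p : Pt}

theorem pos_mem_of_col_mem_Icc [Finite V] (hpl : D.IsPlanar) (hmono : D.IsYMonotone)
    (hg : IsNumbering LeftOf D.items g) {A : Set Pt} (hA : A ∈ D.items)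
    (hrow : (rowSlice A (D.pos w).2).Nonempty)
    (hcol : g A ∈ Icc (D.leftCol g w) (D.rightCol g w)) : D.pos w ∈ A := by
  by_contra hw
  obtain ⟨t, ht⟩ := hrow
  rcases lt_trichotomy t (D.pos w).1 with hlt | rfl | hlt
  · exact (lt_leftCol hpl hmono hg hA hw ht hlt).not_ge hcol.1
  · exact hw ht
  · exact (rightCol_lt hpl hmono hg hA hw ht hlt).not_ge hcol.2

theorem IsYMonotone.rowSlice_curve_nonempty (hmono : D.IsYMonotone) (huv : G.Adj u v) {t : ℝ}
    (ht : t ∈ uIcc (D.pos u).2 (D.pos v).2) : (rowSlice (D.curve u v) t).Nonempty :=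
  (hmono.isMonotoneCurve_curve huv).rowSlice_nonempty
    ⟨_, pos_left_mem_curve⟩ ⟨_, pos_right_mem_curve⟩ ht

variable [Finite V]

theorem eq_attach_of_mem_box_of_ne (hpl : D.IsPlanar) (hmono : D.IsYMonotone)
    (hg : IsNumbering LeftOf D.items g) (huv : G.Adj u v) (hrow : (D.pos u).2 ≠ (D.pos v).2)
    (hp : p ∈ (D.visibilityDrawing g).curve u v)
    (hw : p ∈ ((D.visibilityDrawing g).box w).pts) :
    (w = u ∧ D.attach g u v = p) ∨ (w = v ∧ D.attach g v u = p) := by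
  obtain ⟨⟨hleft, hright⟩, hpw⟩ := mem_visibilityDrawing_box.1 hw
  rw [mem_visibilityDrawing_curve_of_ne hrow, hpw] at hp
  rw [hp.1, Nat.cast_le] at hleft hright
  have hwc : D.pos w ∈ D.curve u v :=
    pos_mem_of_col_mem_Icc hpl hmono hg (curve_mem_items huv hrow)
      (hmono.rowSlice_curve_nonempty huv hp.2) ⟨hleft, hright⟩
  refine (hpl.eq_or_eq_of_pos_mem_curve huv hwc).imp ?_ ?_ <;> rintro rfl
  · exact ⟨rfl, Prod.ext (by rw [attach, attachCol_of_ne hrow, hp.1]) hpw.symm⟩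
  · refine ⟨rfl, Prod.ext ?_ hpw.symm⟩
    rw [attach, attachCol_of_ne hrow.symm, hp.1, D.curve_comm]

theorem PrecedesInRow.eq_attach_of_mem_box (h : D.PrecedesInRow u v) (hpl : D.IsPlanar)
    (hmono : D.IsYMonotone) (hg : IsNumbering LeftOf D.items g) (huv : G.Adj u v)
    (hp : p ∈ (D.visibilityDrawing g).curve u v)
    (hw : p ∈ ((D.visibilityDrawing g).box w).pts) :
    (w = u ∧ D.attach g u v = p) ∨ (w = v ∧ D.attach g v u = p) := by
  obtain ⟨⟨hleft, hright⟩, hpw⟩ := mem_visibilityDrawing_box.1 hw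
  obtain ⟨⟨hup, hpv⟩, hpu⟩ := (h.mem_visibilityDrawing_curve hpl hmono hg).1 hp
  have hwu_row : (D.pos w).2 = (D.pos u).2 := hpw.symm.trans hpu
  rcases eq_or_ne w u with rfl | hwu
  · exact .inl ⟨rfl, Prod.ext (by rw [attach, h.attachCol_left, hup.antisymm hright]) hpw.symm⟩
  rcases eq_or_ne w v with rfl | hwv
  · exact .inr ⟨rfl, Prod.ext (by rw [attach, h.attachCol_right, hpv.antisymm hleft]) hpw.symm⟩
  have hlr : ∀ a, (D.leftCol g a : ℝ) ≤ D.rightCol g a := fun a ↦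
    Nat.cast_le.2 (D.leftCol_le_rightCol g a)
  have huw : D.PrecedesInRow u w := (hpl.precedesInRow_or hwu hwu_row).resolve_left fun hwu ↦ by
    linarith [hwu.rightCol_lt_leftCol hpl hmono hg, hlr u]
  have hwv : D.PrecedesInRow w v :=
    (hpl.precedesInRow_or hwv (hwu_row.trans h.1)).resolve_right fun hvw ↦ by
      linarith [hvw.rightCol_lt_leftCol hpl hmono hg, hlr v]
  have hwc := h.mem_curve hmono huv ⟨huw.2.le, hwv.2.le⟩
  rw [← hwu_row] at hwc
  rcases hpl.eq_or_eq_of_pos_mem_curve huv hwc with rfl | rfl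
  exacts [absurd rfl hwu, absurd rfl hwv.2.ne]

theorem eq_attach_of_mem_box (hpl : D.IsPlanar) (hmono : D.IsYMonotone)
    (hg : IsNumbering LeftOf D.items g) (huv : G.Adj u v)
    (hp : p ∈ (D.visibilityDrawing g).curve u v)
    (hw : p ∈ ((D.visibilityDrawing g).box w).pts) :
    (w = u ∧ D.attach g u v = p) ∨ (w = v ∧ D.attach g v u = p) := by
  by_cases hrow : (D.pos u).2 = (D.pos v).2
  · rcases hpl.precedesInRow_or huv.ne hrow with h | h
    · exact h.eq_attach_of_mem_box hpl hmono hg huv hp hw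
    · rw [visibilityDrawing_curve_comm] at hp
      exact (h.eq_attach_of_mem_box hpl hmono hg huv.symm hp hw).symm
  · exact eq_attach_of_mem_box_of_ne hpl hmono hg huv hrow hp hw

theorem edge_eq_of_mem_curve_of_ne (hpl : D.IsPlanar) (hg : IsNumbering LeftOf D.items g)
    (huv : G.Adj u v) (hxy : G.Adj x y) (huv_row : (D.pos u).2 ≠ (D.pos v).2)
    (hxy_row : (D.pos x).2 ≠ (D.pos y).2) (hp : p ∈ (D.visibilityDrawing g).curve u v)
    (hq : p ∈ (D.visibilityDrawing g).curve x y) : s(u, v) = s(x, y) := by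
  rw [mem_visibilityDrawing_curve_of_ne huv_row] at hp
  rw [mem_visibilityDrawing_curve_of_ne hxy_row] at hq
  exact hpl.edge_eq_of_curve_eq huv hxy <| hg.injOn (curve_mem_items huv huv_row)
    (curve_mem_items hxy hxy_row) (Nat.cast_injective (hp.1.symm.trans hq.1))

theorem exists_mem_box_of_ne_of_precedesInRow (hpl : D.IsPlanar) (hmono : D.IsYMonotone)
    (hg : IsNumbering LeftOf D.items g) (huv : G.Adj u v) (hxy : G.Adj x y)
    (hrow : (D.pos u).2 ≠ (D.pos v).2) (h : D.PrecedesInRow x y)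
    (hp : p ∈ (D.visibilityDrawing g).curve u v) (hq : p ∈ (D.visibilityDrawing g).curve x y) :
    ∃ w, p ∈ ((D.visibilityDrawing g).box w).pts := by
  obtain ⟨⟨hxp, hpy⟩, hpx⟩ := (h.mem_visibilityDrawing_curve hpl hmono hg).1 hq
  rw [mem_visibilityDrawing_curve_of_ne hrow, hpx] at hp
  obtain ⟨hcol, hmem⟩ := hp
  rw [hcol, Nat.cast_le] at hxp hpy
  have hA := curve_mem_items huv hrow
  obtain ⟨t, ht⟩ := hmono.rowSlice_curve_nonempty huv hmem
  by_contra! hbox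
  simp only [mem_visibilityDrawing_box, mem_Icc, hpx, hcol, Nat.cast_le, not_and, and_imp] at hbox
  have hlx := D.leftCol_le_rightCol g x
  have hly := D.leftCol_le_rightCol g y
  have hx : D.pos x ∉ D.curve u v := fun hx ↦
    hbox x (hlx.trans hxp) (le_rightCol ⟨hA, hx⟩) rfl
  have hy : D.pos y ∉ D.curve u v := fun hy ↦
    hbox y (leftCol_le ⟨hA, hy⟩) (hpy.trans hly) h.1
  -- The curve of `uv` passes strictly between `x` and `y`, so it crosses the edge `xy`.
  have hxt : (D.pos x).1 < t := by
    refine lt_of_le_of_ne (not_lt.1 fun htx ↦ ?_) (by rintro rfl; exact hx ht)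
    exact ((lt_leftCol hpl hmono hg hA hx ht htx).trans_le hlx).not_ge hxp
  have hty : t < (D.pos y).1 := by
    have hty := h.1 ▸ ht
    refine lt_of_le_of_ne (not_lt.1 fun hyt ↦ ?_) (by rintro rfl; exact hy hty)
    exact ((rightCol_lt hpl hmono hg hA hy hty hyt).trans_le hpy).not_ge hly
  have hne : s(u, v) ≠ s(x, y) := by grind [h.1]
  obtain ⟨z, ⟨-, hz⟩, hzt⟩ := hpl.curve_inter_subset huv hxy hne
    ⟨ht, h.mem_curve hmono hxy ⟨hxt.le, hty.le⟩⟩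
  have hz_fst : (D.pos z).1 = t := congrArg Prod.fst hzt
  rcases hz with rfl | rfl
  exacts [hxt.ne hz_fst, hty.ne' hz_fst]

theorem PrecedesInRow.lt_of_mem_curve (huv : D.PrecedesInRow u v) (hxy : D.PrecedesInRow x y)
    (hpl : D.IsPlanar) (hmono : D.IsYMonotone) (hg : IsNumbering LeftOf D.items g)
    (hp : p ∈ (D.visibilityDrawing g).curve u v) (hq : p ∈ (D.visibilityDrawing g).curve x y)
    (hbox : ∀ w, p ∉ ((D.visibilityDrawing g).box w).pts) : (D.pos x).1 < (D.pos v).1 := by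
  rw [huv.mem_visibilityDrawing_curve hpl hmono hg] at hp
  rw [hxy.mem_visibilityDrawing_curve hpl hmono hg] at hq
  obtain ⟨⟨-, hpv⟩, hpu⟩ := hp
  obtain ⟨⟨hxp, -⟩, hpx⟩ := hq
  have hlr : ∀ a, (D.leftCol g a : ℝ) ≤ D.rightCol g a := fun a ↦
    Nat.cast_le.2 (D.leftCol_le_rightCol g a)
  have hvx_row : (D.pos v).2 = (D.pos x).2 := huv.1.symm.trans (hpu.symm.trans hpx)
  rcases eq_or_ne v x with rfl | hvx
  · exact absurd (mem_visibilityDrawing_box.2 ⟨⟨(hlr v).trans hxp, hpv.trans (hlr v)⟩, hpx⟩)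
      (hbox v)
  · refine ((hpl.precedesInRow_or hvx hvx_row).resolve_left fun h ↦ ?_).2
    linarith [h.rightCol_lt_leftCol hpl hmono hg, hlr v, hlr x]

theorem exists_mem_box_of_precedesInRow (hpl : D.IsPlanar) (hmono : D.IsYMonotone)
    (hg : IsNumbering LeftOf D.items g) (huv : G.Adj u v) (hxy : G.Adj x y)
    (hne : s(u, v) ≠ s(x, y)) (h : D.PrecedesInRow u v) (h' : D.PrecedesInRow x y)
    (hp : p ∈ (D.visibilityDrawing g).curve u v) (hq : p ∈ (D.visibilityDrawing g).curve x y) :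
    ∃ w, p ∈ ((D.visibilityDrawing g).box w).pts := by
  by_contra! hbox
  have hpu := ((h.mem_visibilityDrawing_curve hpl hmono hg).1 hp).2
  have hpx := ((h'.mem_visibilityDrawing_curve hpl hmono hg).1 hq).2
  -- Between the later left end and the earlier right end, the two original edges overlap.
  obtain ⟨t, hmax, hmin⟩ :
      ∃ t, max (D.pos u).1 (D.pos x).1 < t ∧ t < min (D.pos v).1 (D.pos y).1 :=
    exists_between <| max_lt
      (lt_min h.2 (h'.lt_of_mem_curve h hpl hmono hg hq hp hbox))
      (lt_min (h.lt_of_mem_curve h' hpl hmono hg hp hq hbox) h'.2)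
  obtain ⟨hut, hxt⟩ := max_lt_iff.1 hmax
  obtain ⟨htv, hty⟩ := lt_min_iff.1 hmin
  have hmem : (t, (D.pos u).2) ∈ D.curve x y := by
    rw [← hpu, hpx]
    exact h'.mem_curve hmono hxy ⟨hxt.le, hty.le⟩
  obtain ⟨z, ⟨hz, -⟩, hzt⟩ := hpl.curve_inter_subset huv hxy hne
    ⟨h.mem_curve hmono huv ⟨hut.le, htv.le⟩, hmem⟩
  have hz_fst : (D.pos z).1 = t := congrArg Prod.fst hzt
  rcases hz with rfl | rfl
  exacts [hut.ne hz_fst, htv.ne' hz_fst]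

theorem exists_mem_box_of_mem_curve (hpl : D.IsPlanar) (hmono : D.IsYMonotone)
    (hg : IsNumbering LeftOf D.items g) (huv : G.Adj u v) (hxy : G.Adj x y)
    (hne : s(u, v) ≠ s(x, y)) (hp : p ∈ (D.visibilityDrawing g).curve u v)
    (hq : p ∈ (D.visibilityDrawing g).curve x y) :
    ∃ w, p ∈ ((D.visibilityDrawing g).box w).pts := by
  wlog huv_dir : (D.pos u).2 ≠ (D.pos v).2 ∨ D.PrecedesInRow u v generalizing u v
  · obtain ⟨hrow, hprec⟩ := not_or.1 huv_dir
    rw [Sym2.eq_swap] at hne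
    rw [visibilityDrawing_curve_comm] at hp
    exact this huv.symm hne hp
      (.inr ((hpl.precedesInRow_or huv.ne (not_not.1 hrow)).resolve_left hprec))
  wlog hxy_dir : (D.pos x).2 ≠ (D.pos y).2 ∨ D.PrecedesInRow x y generalizing x y
  · obtain ⟨hrow, hprec⟩ := not_or.1 hxy_dir
    rw [Sym2.eq_swap (a := x)] at hne
    rw [visibilityDrawing_curve_comm] at hq
    exact this hxy.symm hq hne
      (.inr ((hpl.precedesInRow_or hxy.ne (not_not.1 hrow)).resolve_left hprec))
  rcases huv_dir with huv_row | huv_prec <;> rcases hxy_dir with hxy_row | hxy_prec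
  · exact absurd (edge_eq_of_mem_curve_of_ne hpl hg huv hxy huv_row hxy_row hp hq) hne
  · exact exists_mem_box_of_ne_of_precedesInRow hpl hmono hg huv hxy huv_row hxy_prec hp hq
  · exact exists_mem_box_of_ne_of_precedesInRow hpl hmono hg hxy huv hxy_row huv_prec hq hp
  · exact exists_mem_box_of_precedesInRow hpl hmono hg huv hxy hne huv_prec hxy_prec hp hq

end Crossing

section Coordinates

variable {V : Type*} {G : SimpleGraph V} {D : PolylineDrawing G} {g : Set Pt → ℕ}
  {u v : V} {p : Pt}

theorem isPlanar_visibilityDrawing [Finite V] (hpl : D.IsPlanar) (hmono : D.IsYMonotone)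
    (hg : IsNumbering LeftOf D.items g) : (D.visibilityDrawing g).IsPlanar := by
  refine ⟨fun u v ↦ visibilityDrawing_disjoint_box hpl hmono hg, fun u v huv ↦ ?_, fun u v huv ↦ ?_,
    fun u v w huv p hp ↦ ?_, fun u v x y huv hxy hne p hp ↦ ?_⟩
  · exact ⟨isSimpleChain_pair (attach_ne_attach hpl hmono hg huv), isOrthoChain_attach,
      genuineBends_pair _ _⟩
  · exact ⟨_, _, [], rfl, attach_mem_visibilityDrawing_box huv,
      attach_mem_visibilityDrawing_box huv.symm⟩
  · exact (eq_attach_of_mem_box hpl hmono hg huv hp.1 hp.2).imp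
      (And.imp_right (congrArg some)) (And.imp_right (congrArg some))
  · obtain ⟨w, hw⟩ := exists_mem_box_of_mem_curve hpl hmono hg huv hxy hne hp.1 hp.2
    exact ⟨(eq_attach_of_mem_box hpl hmono hg huv hp.1 hw).imp
        (fun h ↦ congrArg some h.2) fun h ↦ congrArg some h.2,
      (eq_attach_of_mem_box hpl hmono hg hxy hp.2 hw).imp
        (fun h ↦ congrArg some h.2) fun h ↦ congrArg some h.2⟩

theorem mem_points_visibilityDrawing [Finite V] (hg : IsNumbering LeftOf D.items g)
    (hp : p ∈ (D.visibilityDrawing g).points) :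
    (∃ k < D.items.ncard, p.1 = k) ∧ ∃ v, p.2 = (D.pos v).2 := by
  have hright := D.rightCol_lt_ncard hg
  have hleft := fun v ↦ (D.leftCol_le_rightCol g v).trans_lt (hright v)
  have hattach : ∀ {u v}, G.Adj u v → D.attachCol g u v < D.items.ncard := fun huv ↦
    (attachCol_mem_Icc huv).2.trans_lt (hright _)
  simp only [OrthDrawing.points, visibilityDrawing, mem_union, mem_iUnion, mem_insert_iff,
    mem_singleton_iff, mem_ofPred_eq, List.mem_cons, List.not_mem_nil, or_false] at hp
  rcases hp with ⟨v, rfl | rfl | rfl | rfl⟩ | ⟨u, v, huv, rfl | rfl⟩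
  exacts [⟨⟨_, hleft v, rfl⟩, v, rfl⟩, ⟨⟨_, hleft v, rfl⟩, v, rfl⟩, ⟨⟨_, hright v, rfl⟩, v, rfl⟩,
    ⟨⟨_, hright v, rfl⟩, v, rfl⟩, ⟨⟨_, hattach huv, rfl⟩, u, rfl⟩,
    ⟨⟨_, hattach huv.symm, rfl⟩, v, rfl⟩]

theorem inWidth_visibilityDrawing [Finite V] (hg : IsNumbering LeftOf D.items g) :
    (D.visibilityDrawing g).InWidth D.items.ncard := by
  refine ⟨0, fun p hp ↦ ?_⟩
  obtain ⟨⟨k, hk, hpk⟩, -⟩ := mem_points_visibilityDrawing hg hp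
  have hk_le : (k : ℝ) + 1 ≤ D.items.ncard := by exact_mod_cast hk
  rw [hpk, Int.cast_zero]
  exact ⟨k.cast_nonneg, by linarith⟩

theorem intCoords_visibilityDrawing [Finite V] (hg : IsNumbering LeftOf D.items g)
    (hrow : ∀ v, ∃ k : ℤ, (D.pos v).2 = k) : (D.visibilityDrawing g).IntCoords := by
  intro p hp
  obtain ⟨⟨k, -, hpk⟩, v, hpv⟩ := mem_points_visibilityDrawing hg hp
  obtain ⟨l, hl⟩ := hrow v
  exact ⟨⟨k, by rw [hpk, Int.cast_natCast]⟩, l, hpv.trans hl⟩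

theorem IsYMonotone.inHeight_iff (hmono : D.IsYMonotone) {h : ℕ} :
    D.InHeight h ↔ ∃ y₀ : ℤ, ∀ v, (D.pos v).2 ∈ Icc (y₀ : ℝ) (y₀ + h - 1) := by
  refine exists_congr fun y₀ ↦ ⟨fun H v ↦ H _ (.inl (mem_range_self v)), fun H p hp ↦ ?_⟩
  rcases hp with ⟨v, rfl⟩ | hp
  · exact H v
  · simp only [mem_iUnion] at hp
    obtain ⟨u, v, huv, (hp : p ∈ D.bends u v)⟩ := hp
    have hpc : p ∈ D.curve u v := mem_curve_of_mem_chain (by simp [chain, hp])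
    exact ordConnected_Icc.uIcc_subset (H u) (H v) (hmono.snd_mem_uIcc huv hpc)

theorem inHeight_visibilityDrawing_iff [Finite V] (hg : IsNumbering LeftOf D.items g) {h : ℕ} :
    (D.visibilityDrawing g).InHeight h ↔
      ∃ y₀ : ℤ, ∀ v, (D.pos v).2 ∈ Icc (y₀ : ℝ) (y₀ + h - 1) := by
  refine exists_congr fun y₀ ↦ ⟨fun H v ↦ ?_, fun H p hp ↦ ?_⟩
  · exact H (D.leftCol g v, (D.pos v).2) (.inl (mem_iUnion.2 ⟨v, .inl rfl⟩))
  · obtain ⟨-, v, hpv⟩ := mem_points_visibilityDrawing hg hp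
    exact hpv ▸ H v

end Coordinates

end PolylineDrawing

theorem OrthDrawing.InWidth.mono {V : Type*} {G : SimpleGraph V} {D : OrthDrawing G} {k l : ℕ}
    (h : D.InWidth k) (hkl : k ≤ l) : D.InWidth l := by
  obtain ⟨x₀, hx₀⟩ := h
  have hkl : (k : ℝ) ≤ l := by exact_mod_cast hkl
  exact ⟨x₀, fun p hp ↦ ⟨(hx₀ p hp).1, (hx₀ p hp).2.trans (by linarith)⟩⟩

theorem PolylineDrawing.exists_flatVR_inWidth_ncard_items {V : Type*} [Finite V]
    {G : SimpleGraph V} (D : PolylineDrawing G) (hpl : D.IsPlanar)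
    (hrow : ∀ v, ∃ k : ℤ, (D.pos v).2 = k) (hmono : D.IsYMonotone) :
    ∃ D' : OrthDrawing G, D'.IsPlanar ∧ D'.IsFlat ∧ D'.IsVR ∧ D'.IntCoords ∧
      (∀ v, (D'.box v).y1 = (D.pos v).2) ∧ (∀ h : ℕ, D.InHeight h ↔ D'.InHeight h) ∧
      D'.InWidth D.items.ncard := by
  obtain ⟨g, hg⟩ := (isCurveSystem_items hpl hmono).exists_isNumbering D.finite_items
  exact ⟨D.visibilityDrawing g, isPlanar_visibilityDrawing hpl hmono hg, fun _ ↦ rfl,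
    fun _ _ _ ↦ rfl, intCoords_visibilityDrawing hg hrow, fun _ ↦ rfl,
    fun _ ↦ hmono.inHeight_iff.trans (inHeight_visibilityDrawing_iff hg).symm,
    inWidth_visibilityDrawing hg⟩

theorem yMonotonePolyline_to_flatVR_width_general {V : Type*} [Finite V] {G : SimpleGraph V}
    (hconn : G.Connected) (D : PolylineDrawing G) (hpl : D.IsPlanar)
    (hrow : ∀ v, ∃ k : ℤ, (D.pos v).2 = k) (hmono : D.IsYMonotone) :
    ∃ D' : OrthDrawing G, D'.IsPlanar ∧ D'.IsFlat ∧ D'.IsVR ∧ D'.IntCoords ∧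
      (∀ v, (D'.box v).y1 = (D.pos v).2) ∧ (∀ h : ℕ, D.InHeight h ↔ D'.InHeight h) ∧
      D'.InWidth (max (Nat.card V) G.edgeSet.ncard) := by
  obtain ⟨D', hplanar, hflat, hvr, hint, hpos, hheight, hwidth⟩ :=
    D.exists_flatVR_inWidth_ncard_items hpl hrow hmono
  exact ⟨D', hplanar, hflat, hvr, hint, hpos, hheight, hwidth.mono (D.ncard_items_le hconn)⟩
/-- If a connected finite simple graph `G` with `n` vertices and `m`
edges has a planar y-monotone poly-line drawing `D` with `b` bends in total, then `G`
has a planar flat visibility representation with the same y-coordinates as `D` (in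
particular of the same height) and width at most `max (n + b) (m + b)`. -/
theorem yMonotonePolyline_to_flatVR_width {V : Type} [Fintype V] [DecidableEq V]
    (G : SimpleGraph V) [DecidableRel G.Adj] (hconn : G.Connected)
    (D : PolylineDrawing G) (hpl : D.IsPlanar) (hint : D.IntCoords)
    (hmono : D.IsYMonotone) :
    ∃ D' : OrthDrawing G, D'.IsPlanar ∧ D'.IsFlat ∧ D'.IsVR ∧ D'.IntCoords ∧
      (∀ v, (D'.box v).y1 = (D.pos v).2) ∧
      (∀ h : ℕ, D.InHeight h ↔ D'.InHeight h) ∧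
      D'.InWidth (max (Fintype.card V + D.bendCount)
        (G.edgeFinset.card + D.bendCount)) := by
  obtain ⟨D', hplanar, hflat, hvr, hD'int, hpos, hheight, hwidth⟩ :=
    yMonotonePolyline_to_flatVR_width_general hconn D hpl
      (fun v ↦ (hint _ (.inl (mem_range_self v))).2) hmono
  refine ⟨D', hplanar, hflat, hvr, hD'int, hpos, hheight, hwidth.mono ?_⟩
  rw [Nat.card_eq_fintype_card, ← SimpleGraph.coe_edgeFinset, ncard_coe_finset]
  exact max_le_max (Nat.le_add_right _ _) (Nat.le_add_right _ _)
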